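/- Let (X, 𝒜) be a measurable space, let p be the uniform probability measure on Bool (p({true}) = 1/2), and let κ be a Markov kernel from Bool to X with κ(true) = μ and κ(false) = ν, two mutually absolutely continuous probability measures. Let m = (1/2)•μ + (1/2)•ν. Then KL(p ⊗ₘ κ ‖ p × m) ≤ (1/4)·(KL(μ ‖ ν) + KL(ν ‖ μ)), where KL denotes the Kullback–Leibler divergence (valued in [0, ∞]). -/

import Mathlib

open MeasureTheory ProbabilityTheory
open scoped ENNReal ProbabilityTheory Classical

/-- The Kullback–Leibler divergence, valued in `[0, ∞]`: it is
`∫ log (dμ/dν) dμ` when `μ ≪ ν` and the log-likelihood ratio is integrable,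
and `∞` otherwise. -/
noncomputable def klDiv {X : Type*} [MeasurableSpace X] (μ ν : Measure X) : ℝ≥0∞ :=
  if μ ≪ ν ∧ Integrable (llr μ ν) μ then ENNReal.ofReal (∫ x, llr μ ν x ∂μ) else ⊤

/-!
Let `m` be the law of `X`, the mixture of the conditional laws `κ a` under `p`. The mutual
information is the `p`-average of `KL(κ a ‖ m)`. By data processing applied to the projection
`(b, x) ↦ x`, the divergence is convex, so `KL(κ a ‖ m)` is at most the average over `b` of
`KL(κ a ‖ κ b)`. The mutual information is therefore at most the mean of `KL(κ a ‖ κ b)` over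
independent `a, b ~ p`. On `Bool` the diagonal terms vanish and both off-diagonal ones have weight
`p {true} * p {false}`.
-/

open InformationTheory (klFun klDiv_map_le klDiv_self klDiv_of_not_ac
  klDiv_eq_lintegral_klFun_of_ac)

lemma klDiv_eq_informationTheory_klDiv {X : Type*} [MeasurableSpace X] {μ ν : Measure X}
    (h : μ Set.univ = ν Set.univ) : klDiv μ ν = InformationTheory.klDiv μ ν := by
  simp only [klDiv, InformationTheory.klDiv_def, measureReal_def, h, add_sub_cancel_right]

section CompProd

variable {α X : Type*} [MeasurableSpace α] [MeasurableSpace X]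
  [MeasurableSpace.CountableOrCountablyGenerated α X]

lemma rnDeriv_compProd_right_ae_eq {p : Measure α} [IsFiniteMeasure p] {κ η : Kernel α X}
    [IsFiniteKernel κ] [IsFiniteKernel η] (h_ac : ∀ᵐ a ∂p, κ a ≪ η a) :
    (p ⊗ₘ κ).rnDeriv (p ⊗ₘ η) =ᵐ[p ⊗ₘ η] fun z ↦ κ.rnDeriv η z.1 z.2 := by
  have h_density : p ⊗ₘ κ = (p ⊗ₘ η).withDensity fun z ↦ κ.rnDeriv η z.1 z.2 := by
    rw [← Measure.compProd_withDensity (by fun_prop)]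
    refine Measure.compProd_congr ?_
    filter_upwards [h_ac] with a ha using (Kernel.withDensity_rnDeriv_eq ha).symm
  rw [h_density]
  exact Measure.rnDeriv_withDensity _ (by fun_prop)

lemma klDiv_eq_lintegral_klFun_kernel_rnDeriv {κ η : Kernel α X} [IsFiniteKernel κ]
    [IsFiniteKernel η] {a : α} (h_ac : κ a ≪ η a) :
    InformationTheory.klDiv (κ a) (η a)
      = ∫⁻ x, ENNReal.ofReal (klFun (κ.rnDeriv η a x).toReal) ∂η a := by
  rw [klDiv_eq_lintegral_klFun_of_ac h_ac]
  refine lintegral_congr_ae ?_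
  filter_upwards [κ.rnDeriv_eq_rnDeriv_measure (η := η) (a := a)] with x hx
  rw [hx]

lemma lintegral_klDiv_eq_top_of_not_ae_ac {p : Measure α} {κ η : Kernel α X} [IsFiniteKernel κ]
    [IsFiniteKernel η] (h_ac : ¬ ∀ᵐ a ∂p, κ a ≪ η a) :
    ∫⁻ a, InformationTheory.klDiv (κ a) (η a) ∂p = ∞ := by
  refine eq_top_iff.2 ?_
  calc ∞
    _ = ∫⁻ _ in {a | ¬ κ a ≪ η a}, ∞ ∂p := by
      rw [setLIntegral_const, ENNReal.top_mul (mt ae_iff.2 h_ac)]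
    _ = ∫⁻ a in {a | ¬ κ a ≪ η a}, InformationTheory.klDiv (κ a) (η a) ∂p :=
      setLIntegral_congr_fun (Kernel.measurableSet_absolutelyContinuous κ η).compl
        fun _ ha ↦ (klDiv_of_not_ac ha).symm
    _ ≤ ∫⁻ a, InformationTheory.klDiv (κ a) (η a) ∂p := setLIntegral_le_lintegral _ _

theorem klDiv_compProd_right_eq_lintegral (p : Measure α) [IsFiniteMeasure p] (κ η : Kernel α X)
    [IsFiniteKernel κ] [IsFiniteKernel η] :
    InformationTheory.klDiv (p ⊗ₘ κ) (p ⊗ₘ η)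
      = ∫⁻ a, InformationTheory.klDiv (κ a) (η a) ∂p := by
  by_cases h_ac : ∀ᵐ a ∂p, κ a ≪ η a
  · calc InformationTheory.klDiv (p ⊗ₘ κ) (p ⊗ₘ η)
      _ = ∫⁻ z, ENNReal.ofReal (klFun ((p ⊗ₘ κ).rnDeriv (p ⊗ₘ η) z).toReal) ∂(p ⊗ₘ η) :=
        klDiv_eq_lintegral_klFun_of_ac (Measure.absolutelyContinuous_compProd_right_iff.2 h_ac)
      _ = ∫⁻ z, ENNReal.ofReal (klFun (κ.rnDeriv η z.1 z.2).toReal) ∂(p ⊗ₘ η) := by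
        refine lintegral_congr_ae ?_
        filter_upwards [rnDeriv_compProd_right_ae_eq h_ac] with z hz
        rw [hz]
      _ = ∫⁻ a, ∫⁻ x, ENNReal.ofReal (klFun (κ.rnDeriv η a x).toReal) ∂η a ∂p :=
        Measure.lintegral_compProd (by fun_prop)
      _ = ∫⁻ a, InformationTheory.klDiv (κ a) (η a) ∂p := by
        refine lintegral_congr_ae ?_
        filter_upwards [h_ac] with a ha using (klDiv_eq_lintegral_klFun_kernel_rnDeriv ha).symm
  · have h_joint : ¬ p ⊗ₘ κ ≪ p ⊗ₘ η := mt Measure.absolutelyContinuous_compProd_right_iff.1 h_ac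
    rw [klDiv_of_not_ac h_joint, lintegral_klDiv_eq_top_of_not_ae_ac h_ac]

theorem klDiv_comp_le_lintegral (p : Measure α) [IsFiniteMeasure p] (κ η : Kernel α X)
    [IsFiniteKernel κ] [IsFiniteKernel η] :
    InformationTheory.klDiv (κ ∘ₘ p) (η ∘ₘ p) ≤ ∫⁻ a, InformationTheory.klDiv (κ a) (η a) ∂p := by
  rw [← klDiv_compProd_right_eq_lintegral, ← Measure.snd_compProd, ← Measure.snd_compProd]
  exact klDiv_map_le _ _ measurable_snd

lemma klDiv_comp_right_le_lintegral (μ : Measure X) [IsFiniteMeasure μ] (p : Measure α)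
    [IsProbabilityMeasure p] (κ : Kernel α X) [IsFiniteKernel κ] :
    InformationTheory.klDiv μ (κ ∘ₘ p) ≤ ∫⁻ a, InformationTheory.klDiv μ (κ a) ∂p := by
  simpa only [Measure.const_comp, measure_univ, one_smul, Kernel.const_apply]
    using klDiv_comp_le_lintegral p (Kernel.const α μ) κ

theorem klDiv_compProd_prod_comp_le_lintegral
    (p : Measure α) [IsProbabilityMeasure p] (κ : Kernel α X) [IsFiniteKernel κ] :
    InformationTheory.klDiv (p ⊗ₘ κ) (p.prod (κ ∘ₘ p))
      ≤ ∫⁻ a, ∫⁻ b, InformationTheory.klDiv (κ a) (κ b) ∂p ∂p := by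
  rw [← Measure.compProd_const, klDiv_compProd_right_eq_lintegral]
  exact lintegral_mono fun a ↦ klDiv_comp_right_le_lintegral (κ a) p κ

end CompProd

section Bool

variable {X : Type*} [MeasurableSpace X]

lemma comp_measure_bool (κ : Kernel Bool X) (p : Measure Bool) :
    κ ∘ₘ p = p {true} • κ true + p {false} • κ false := by
  conv_lhs => rw [Kernel.eq_boolKernel κ, boolKernel_comp_measure]

lemma prob_singleton_false (p : Measure Bool) [IsProbabilityMeasure p] :
    p {false} = 1 - p {true} := by
  have h_compl : ({true}ᶜ : Set Bool) = {false} := by ext b; cases b <;> simp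
  rw [← h_compl, prob_compl_eq_one_sub (measurableSet_singleton true)]

lemma lintegral_lintegral_klDiv_bool (p : Measure Bool) (κ : Kernel Bool X) [IsFiniteKernel κ] :
    ∫⁻ a, ∫⁻ b, InformationTheory.klDiv (κ a) (κ b) ∂p ∂p
      = p {true} * p {false} * (InformationTheory.klDiv (κ true) (κ false)
        + InformationTheory.klDiv (κ false) (κ true)) := by
  simp only [lintegral_fintype, Fintype.sum_bool, klDiv_self]
  ring

theorem fade_stmt8_general (p : Measure Bool) [IsProbabilityMeasure p]
    (κ : Kernel Bool X) [IsMarkovKernel κ] :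
    klDiv (p ⊗ₘ κ) (p.prod (p {true} • κ true + p {false} • κ false))
      ≤ p {true} * p {false} * (klDiv (κ true) (κ false) + klDiv (κ false) (κ true)) := by
  rw [← comp_measure_bool κ p]
  simp only [klDiv_eq_informationTheory_klDiv, measure_univ]
  exact (klDiv_compProd_prod_comp_le_lintegral p κ).trans_eq (lintegral_lintegral_klDiv_bool p κ)

end Bool

/-- With `C` uniform on `Bool` and `X | C = true ~ μ`, `X | C = false ~ ν` mutually
absolutely continuous probability measures, and `m = (1/2) μ + (1/2) ν` the marginal,
the mutual information `KL(p ⊗ₘ κ ‖ p × m)` is at most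
`(1/4) (KL(μ ‖ ν) + KL(ν ‖ μ))`. -/
theorem fade_stmt8 {X : Type*} [MeasurableSpace X]
    (p : Measure Bool) [IsProbabilityMeasure p] (hp : p {true} = 1 / 2)
    (μ ν : Measure X) [IsProbabilityMeasure μ] [IsProbabilityMeasure ν]
    (hμν : μ ≪ ν) (hνμ : ν ≪ μ)
    (κ : Kernel Bool X) [IsMarkovKernel κ] (ht : κ true = μ) (hf : κ false = ν) :
    klDiv (p ⊗ₘ κ) (p.prod ((1 / 2 : ℝ≥0∞) • μ + (1 / 2 : ℝ≥0∞) • ν))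
      ≤ (1 / 4 : ℝ≥0∞) * (klDiv μ ν + klDiv ν μ) := by
  have hp_false : p {false} = 1 / 2 := by
    rw [prob_singleton_false, hp, one_div, ENNReal.one_sub_inv_two]
  have h_quarter : (1 / 2 : ℝ≥0∞) * (1 / 2) = 1 / 4 := by
    rw [one_div, one_div, ← ENNReal.mul_inv (by simp) (by simp)]
    norm_num
  simpa only [hp, hp_false, ht, hf, h_quarter] using fade_stmt8_general p κ
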